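/- Let Q_k denote the negative-definite quadratic form Q_k(x) = −(x₁² + ⋯ + x_k²) on ℝᵏ, and let the complex Clifford algebra be Cℓᶜ_k = ℂ ⊗ℝ CliffordAlgebra(Q_k). Then for every k ≥ 0 there is an isomorphism of ℂ-algebras Cℓᶜ_{k+2} ≅ Cℓᶜ_k ⊗ℂ M₂(ℂ). -/

import Mathlib

open scoped TensorProduct

/-- The negative-definite quadratic form `Q_k(x) = −(x₁² + ⋯ + x_k²)` on `ℝᵏ`.  The
complex Clifford algebra is `Cℓᶜ_k = ℂ ⊗ℝ CliffordAlgebra (negDefiniteForm k)`. -/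
noncomputable def negDefiniteForm (k : ℕ) : QuadraticForm ℝ (Fin k → ℝ) :=
  QuadraticMap.weightedSumSquares ℝ (fun _ : Fin k => (-1 : ℝ))

/-!
Let `e₁, e₂` generate the Clifford algebra of the binary form `Q₂ = c₁x² + c₂y²`. Its volume
element `ω = e₁e₂` is even, anticommutes with `e₁` and `e₂`, and squares to the scalar
`d = -c₁c₂`. Inside `Cl(Q ⊥ Q₂)` the vectors `m` of `Q` anticommute with `e₁` and `e₂`, so the
products `mω` commute with them; rescaled by `d⁻¹`, they generate a copy of `Cl(d⁻¹Q)` centralizing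
`Cl(Q₂)`, whence `Cl(Q ⊥ Q₂) ≅ Cl(d⁻¹Q) ⊗ Cl(Q₂)`. Once `d` is a square, `d⁻¹Q` is isometric to
`Q`; once `c₁` is a square, the quaternion algebra `Cl(Q₂)` splits. Over `ℂ` both hold.
-/

open CliffordAlgebra
open scoped Quaternion

noncomputable section

namespace CliffordPeriodicity

section VolumeElement

variable {R M N : Type*} [CommRing R] [AddCommGroup M] [Module R M] [AddCommGroup N] [Module R N]

theorem commute_map_of_commute_map_ι {B : Type*} [Ring B] [Algebra R B] {Q : QuadraticForm R M}
    (f : CliffordAlgebra Q →ₐ[R] B) {b : B} (h : ∀ m, Commute (f (ι Q m)) b)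
    (a : CliffordAlgebra Q) : Commute (f a) b := by
  induction a using CliffordAlgebra.induction with
  | algebraMap r => rw [f.commutes]; exact Algebra.commutes r b
  | ι m => exact h m
  | mul a₁ a₂ h₁ h₂ => rw [map_mul]; exact h₁.mul_left h₂
  | add a₁ a₂ h₁ h₂ => rw [map_add]; exact h₁.add_left h₂

/-- `ω` behaves like the product of an orthogonal basis of a nondegenerate form of even rank: it is
even, anticommutes with all vectors, and squares to the invertible scalar `d`. -/
structure IsVolumeElement {Q₂ : QuadraticForm R N} (ω : CliffordAlgebra Q₂) (d : Rˣ) : Prop where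
  mem_evenOdd_zero : ω ∈ evenOdd Q₂ 0
  mul_self : ω * ω = algebraMap R _ d
  mul_ι (n : N) : ω * ι Q₂ n = -(ι Q₂ n * ω)

theorem isVolumeElement_quaternionBasis_k (c₁ c₂ : Rˣ) :
    IsVolumeElement (CliffordAlgebraQuaternion.quaternionBasis (c₁ : R) c₂).k (-(c₁ * c₂)) where
  mem_evenOdd_zero := ι_mul_ι_mem_evenOdd_zero _ _ _
  mul_self := by
    rw [QuaternionAlgebra.Basis.k_mul_k, Algebra.algebraMap_eq_smul_one, Units.val_neg,
      Units.val_mul, neg_smul]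
  mul_ι v := by
    set e := CliffordAlgebraQuaternion.quaternionBasis (c₁ : R) c₂
    have ι_eq : ι _ v = v.1 • e.i + v.2 • e.j := by
      simp [e, CliffordAlgebraQuaternion.quaternionBasis, ← map_smul, ← map_add]
    simp [ι_eq, mul_add, add_mul, add_comm]

namespace IsVolumeElement

variable {Q₂ : QuadraticForm R N} {ω : CliffordAlgebra Q₂} {d : Rˣ}

theorem map_inr_mul_self (hω : IsVolumeElement ω d) (Q : QuadraticForm R M) :
    map (.inr Q Q₂) ω * map (.inr Q Q₂) ω = algebraMap R _ d := by
  rw [← map_mul, hω.mul_self, AlgHom.commutes]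

theorem commute_ι_inl_map_inr (hω : IsVolumeElement ω d) (Q : QuadraticForm R M) (m : M) :
    Commute (ι (Q.prod Q₂) (m, 0)) (map (.inr Q Q₂) ω) := by
  simpa using commute_map_mul_map_of_isOrtho_of_mem_evenOdd_zero_right (.inl Q Q₂) (.inr Q Q₂)
    (fun x y => .inl_inr x y) (ι Q m) ω (ι_mem_evenOdd_one Q m) hω.mem_evenOdd_zero

theorem map_inr_mul_ι_inr (hω : IsVolumeElement ω d) (Q : QuadraticForm R M) (n : N) :
    map (.inr Q Q₂) ω * ι (Q.prod Q₂) (0, n) = -(ι (Q.prod Q₂) (0, n) * map (.inr Q Q₂) ω) := by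
  simpa using congrArg (map (.inr Q Q₂)) (hω.mul_ι n)

theorem ι_inl_mul_map_inr_mul_self (hω : IsVolumeElement ω d) (Q : QuadraticForm R M) (m : M) :
    ι (Q.prod Q₂) (m, 0) * map (.inr Q Q₂) ω * (ι (Q.prod Q₂) (m, 0) * map (.inr Q Q₂) ω) =
      algebraMap R _ (Q m * d) := by
  rw [(hω.commute_ι_inl_map_inr Q m).symm.mul_mul_mul_comm, ι_sq_scalar, hω.map_inr_mul_self,
    ← map_mul]
  simp

variable (hω : IsVolumeElement ω d) (Q : QuadraticForm R M)

/-- The copy of `Cl(d⁻¹Q)` in `Cl(Q ⊥ Q₂)` that commutes with `Cl(Q₂)`, generated by the vectors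
of `Q` multiplied by the volume element. -/
def twistedInl : CliffordAlgebra (d⁻¹ • Q) →ₐ[R] CliffordAlgebra (Q.prod Q₂) :=
  lift (d⁻¹ • Q)
    ⟨(↑d⁻¹ : R) • LinearMap.mulRight R (map (.inr Q Q₂) ω) ∘ₗ ι _ ∘ₗ LinearMap.inl R M N,
      fun m => by
        simp [ι_inl_mul_map_inr_mul_self hω, Units.smul_def, Algebra.algebraMap_eq_smul_one,
          smul_smul, mul_comm (Q m)]⟩

theorem twistedInl_ι (m : M) :
    hω.twistedInl Q (ι _ m) = (↑d⁻¹ : R) • (ι (Q.prod Q₂) (m, 0) * map (.inr Q Q₂) ω) :=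
  lift_ι_apply _ _ _

theorem commute_twistedInl_map_inr (a : CliffordAlgebra (d⁻¹ • Q)) (b : CliffordAlgebra Q₂) :
    Commute (hω.twistedInl Q a) (map (.inr Q Q₂) b) := by
  have generators (m : M) (n : N) :
      Commute (ι (Q.prod Q₂) (m, 0) * map (.inr Q Q₂) ω) (ι (Q.prod Q₂) (0, n)) := by
    rw [Commute, SemiconjBy, mul_assoc, hω.map_inr_mul_ι_inr, mul_neg,
      ι_mul_ι_mul_of_isOrtho _ (.inl_inr m n), neg_neg]
  refine commute_map_of_commute_map_ι _ (fun m => ?_) a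
  refine (commute_map_of_commute_map_ι _ (fun n => ?_) b).symm
  rw [twistedInl_ι, map_apply_ι]
  exact ((generators m n).smul_left _).symm

/-- The inverse of `IsVolumeElement.prodEquiv`. -/
def ofTensor :
    CliffordAlgebra (d⁻¹ • Q) ⊗[R] CliffordAlgebra Q₂ →ₐ[R] CliffordAlgebra (Q.prod Q₂) :=
  Algebra.TensorProduct.lift (hω.twistedInl Q) (map (.inr Q Q₂)) (hω.commute_twistedInl_map_inr Q)

/-- The forward direction of `IsVolumeElement.prodEquiv`, sending `(m, n)` to `m ⊗ ω + 1 ⊗ n`;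
the cross terms of the square of this element cancel because `ω` and `n` anticommute. -/
def toTensor :
    CliffordAlgebra (Q.prod Q₂) →ₐ[R] CliffordAlgebra (d⁻¹ • Q) ⊗[R] CliffordAlgebra Q₂ :=
  lift (Q.prod Q₂)
    ⟨((TensorProduct.mk R _ _).flip ω ∘ₗ ι (d⁻¹ • Q)).coprod ((TensorProduct.mk R _ _ 1) ∘ₗ ι Q₂),
      fun ⟨m, n⟩ => by
        simp [add_mul, mul_add, hω.mul_self, hω.mul_ι, Algebra.algebraMap_eq_smul_one,
          TensorProduct.tmul_neg, TensorProduct.smul_tmul', TensorProduct.tmul_smul, smul_smul,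
          Algebra.TensorProduct.one_def, Units.smul_def, add_smul]⟩

@[simp]
theorem toTensor_ι (m : M) (n : N) :
    hω.toTensor Q (ι _ (m, n)) = ι (d⁻¹ • Q) m ⊗ₜ ω + 1 ⊗ₜ ι Q₂ n :=
  lift_ι_apply _ _ _

theorem toTensor_map_inr (b : CliffordAlgebra Q₂) :
    hω.toTensor Q (map (.inr Q Q₂) b) = 1 ⊗ₜ b := by
  suffices (hω.toTensor Q).comp (map (.inr Q Q₂)) = Algebra.TensorProduct.includeRight from
    DFunLike.congr_fun this b
  ext n
  simp

theorem ofTensor_comp_toTensor : (hω.ofTensor Q).comp (hω.toTensor Q) = AlgHom.id R _ := by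
  ext x
  · simp [ofTensor, twistedInl_ι, mul_assoc, hω.map_inr_mul_self, Algebra.algebraMap_eq_smul_one,
      smul_smul]
  · simp [ofTensor]

theorem toTensor_comp_ofTensor : (hω.toTensor Q).comp (hω.ofTensor Q) = AlgHom.id R _ := by
  ext x
  · simp [ofTensor, twistedInl_ι, toTensor_map_inr, hω.mul_self, Algebra.algebraMap_eq_smul_one,
      smul_smul, ← TensorProduct.tmul_smul]
  · simp [ofTensor]

/-- A volume element of `Q₂` untwists the graded tensor product `Cl(Q ⊥ Q₂)` of `Cl(Q)` and
`Cl(Q₂)` into an ordinary one, at the price of rescaling `Q`. -/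
def prodEquiv :
    CliffordAlgebra (Q.prod Q₂) ≃ₐ[R] CliffordAlgebra (d⁻¹ • Q) ⊗[R] CliffordAlgebra Q₂ :=
  AlgEquiv.ofAlgHom (hω.toTensor Q) (hω.ofTensor Q) (hω.toTensor_comp_ofTensor Q)
    (hω.ofTensor_comp_toTensor Q)

end IsVolumeElement

end VolumeElement

section QuaternionMatrix

variable {R : Type*} [CommRing R]

/-- Matrices spanning a split quaternion algebra, one of whose parameters is the square of `a`. -/
def quaternionMatrixBasis {a c₁ : R} (ha : a * a = c₁) (c₂ : R) :
    QuaternionAlgebra.Basis (Matrix (Fin 2) (Fin 2) R) c₁ 0 c₂ where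
  i := !![a, 0; 0, -a]
  j := !![0, c₂; 1, 0]
  k := !![0, a * c₂; -a, 0]
  i_mul_i := by simp [ha, Matrix.smul_one_eq_diagonal, Matrix.diagonal_fin_two]
  j_mul_j := by simp [Matrix.smul_one_eq_diagonal, Matrix.diagonal_fin_two]
  i_mul_j := by simp
  j_mul_i := by simp [mul_comm]

theorem quaternionMatrixBasis_liftHom_apply {a c₁ : R} (ha : a * a = c₁) (c₂ : R)
    (q : ℍ[R,c₁,0,c₂]) :
    (quaternionMatrixBasis ha c₂).liftHom q =
      !![q.re + a * q.imI, c₂ * (q.imJ + a * q.imK); q.imJ - a * q.imK, q.re - a * q.imI] := by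
  ext i j
  fin_cases i <;> fin_cases j <;>
    simp only [QuaternionAlgebra.Basis.liftHom_apply, QuaternionAlgebra.Basis.lift,
      quaternionMatrixBasis, Matrix.add_apply, Matrix.smul_apply, smul_eq_mul,
      Algebra.algebraMap_eq_smul_one, Matrix.one_apply, Matrix.of_apply, Matrix.cons_val',
      Matrix.cons_val_zero, Matrix.cons_val_one, Matrix.cons_val_fin_one, Fin.zero_eta,
      Fin.mk_one, Fin.isValue] <;>
    grind

theorem quaternionMatrixBasis_liftHom_bijective [Invertible (2 : R)] {c₁ : R} (a c₂ : Rˣ)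
    (ha : (a * a : R) = c₁) :
    Function.Bijective (quaternionMatrixBasis ha (c₂ : R)).liftHom := by
  have half_mul_two : ⅟2 * (2 : R) = 1 := invOf_mul_self 2
  have a_inv_mul : (↑a⁻¹ : R) * a = 1 := a.inv_mul
  have c₂_inv_mul : (↑c₂⁻¹ : R) * c₂ = 1 := c₂.inv_mul
  let inverse (x : Matrix (Fin 2) (Fin 2) R) : ℍ[R,c₁,0,c₂] :=
    ⟨⅟2 * (x 0 0 + x 1 1), ⅟2 * ↑a⁻¹ * (x 0 0 - x 1 1),
      ⅟2 * (↑c₂⁻¹ * x 0 1 + x 1 0), ⅟2 * ↑a⁻¹ * (↑c₂⁻¹ * x 0 1 - x 1 0)⟩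
  refine Function.bijective_iff_has_inverse.mpr ⟨inverse, fun q => ?_, fun x => ?_⟩
  · rw [quaternionMatrixBasis_liftHom_apply]
    ext <;>
      simp only [inverse, Matrix.of_apply, Matrix.cons_val', Matrix.cons_val_zero,
        Matrix.cons_val_one, Matrix.cons_val_fin_one] <;>
      grind
  · rw [quaternionMatrixBasis_liftHom_apply]
    ext i j
    fin_cases i <;> fin_cases j <;>
      simp only [inverse, Matrix.of_apply, Matrix.cons_val', Matrix.cons_val_zero,
        Matrix.cons_val_one, Matrix.cons_val_fin_one, Fin.zero_eta, Fin.mk_one, Fin.isValue] <;>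
      grind

/-- The splitting of a quaternion algebra one of whose parameters is the square of `a`. -/
def quaternionEquivMatrix [Invertible (2 : R)] {c₁ : R} (a c₂ : Rˣ) (ha : (a * a : R) = c₁) :
    ℍ[R,c₁,0,c₂] ≃ₐ[R] Matrix (Fin 2) (Fin 2) R :=
  AlgEquiv.ofBijective _ (quaternionMatrixBasis_liftHom_bijective a c₂ ha)

end QuaternionMatrix

section BaseChange

variable {R : Type*} [CommRing R] (A : Type*) [CommRing A] [Algebra R A]

/-- Extension of scalars is monoidal on algebras. -/
def baseChangeTensorEquiv (B C : Type*) [Ring B] [Ring C] [Algebra R B] [Algebra R C] :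
    A ⊗[R] (B ⊗[R] C) ≃ₐ[A] (A ⊗[R] B) ⊗[A] (A ⊗[R] C) :=
  (Algebra.TensorProduct.assoc R R A A B C).symm.trans <|
    (Algebra.TensorProduct.congr (Algebra.TensorProduct.rid A A (A ⊗[R] B)).symm .refl).trans <|
      Algebra.TensorProduct.assoc R A A (A ⊗[R] B) A C

variable [Invertible (2 : R)]

variable {A} in
/-- Scaling by a unit that becomes a square `b²` over `A` is undone, over `A`, by multiplying
vectors by `b`. -/
def baseChangeSMulIsometryEquiv {M : Type*} [AddCommGroup M] [Module R M] (Q : QuadraticForm R M)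
    {u : Rˣ} (b : Aˣ) (hb : (b * b : A) = algebraMap R A u) :
    ((u • Q).baseChange A).IsometryEquiv (Q.baseChange A) where
  toLinearEquiv := LinearEquiv.smulOfUnit b
  map_app' x := by
    have baseChange_smul : (u • Q).baseChange A = (b * b : A) • Q.baseChange A := by
      ext
      simp [hb, Units.smul_def, Algebra.smul_def]
    rw [baseChange_smul]
    exact QuadraticMap.map_smul _ (b : A) x

/-- Extension of scalars of the binary form `c₁x² + c₂y²`. -/
def baseChangeBinaryIsometryEquiv (c₁ c₂ : R) :
    ((CliffordAlgebraQuaternion.Q c₁ c₂).baseChange A).IsometryEquiv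
      (CliffordAlgebraQuaternion.Q (algebraMap R A c₁) (algebraMap R A c₂)) :=
  let e : A ⊗[R] (R × R) ≃ₗ[A] A × A := TensorProduct.prodRight R A A R R ≪≫ₗ
    (TensorProduct.AlgebraTensorModule.rid R A A).prodCongr
      (TensorProduct.AlgebraTensorModule.rid R A A)
  have comp_eq : (CliffordAlgebraQuaternion.Q (algebraMap R A c₁) (algebraMap R A c₂)).comp
      (e : A ⊗[R] (R × R) →ₗ[A] A × A) = (CliffordAlgebraQuaternion.Q c₁ c₂).baseChange A := by
    ext v
    simp [e, Algebra.smul_def]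
  { e with map_app' := DFunLike.congr_fun comp_eq }

variable {A}

/-- The Clifford algebra of `c₁x² + c₂y²` splits over any `A` in which `c₁` is a square `a²`. -/
def baseChangeBinaryCliffordEquivMatrix (c₁ : R) (c₂ : Rˣ) (a : Aˣ)
    (ha : (a * a : A) = algebraMap R A c₁) :
    A ⊗[R] CliffordAlgebra (CliffordAlgebraQuaternion.Q c₁ (c₂ : R)) ≃ₐ[A]
      Matrix (Fin 2) (Fin 2) A :=
  letI : Invertible (2 : A) := (Invertible.map (algebraMap R A) 2).copy 2 (map_ofNat _ 2).symm
  (equivBaseChange A _).symm.trans <|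
    (equivOfIsometry (baseChangeBinaryIsometryEquiv A _ _)).trans <|
      CliffordAlgebraQuaternion.equiv.trans <|
        quaternionEquivMatrix a (Units.map (algebraMap R A : R →* A) c₂) ha

end BaseChange

/-- A diagonal form splits off the binary form in its last two variables. -/
def weightedSumSquaresAddTwoIsometryEquiv {R : Type*} [CommRing R] {k : ℕ} (w : Fin (k + 2) → R) :
    (QuadraticMap.weightedSumSquares R w).IsometryEquiv
      ((QuadraticMap.weightedSumSquares R fun i => w (Fin.castAdd 2 i)).prod
        (CliffordAlgebraQuaternion.Q (w (Fin.natAdd k 0)) (w (Fin.natAdd k 1)))) where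
  toLinearEquiv := LinearEquiv.funCongrLeft R R finSumFinEquiv ≪≫ₗ
    LinearEquiv.sumArrowLequivProdArrow _ _ R R ≪≫ₗ
    (LinearEquiv.refl R _).prodCongr (LinearEquiv.finTwoArrow R R)
  map_app' v := by
    simp [QuadraticMap.weightedSumSquares_apply, Fin.sum_univ_add]

end CliffordPeriodicity

end

open CliffordPeriodicity

/-- Over `A = R`, the case `c₁ = 1`, `c₂ = -1` says that adding a hyperbolic plane to `Q` tensors
`Cl(Q)` with `M₂(R)`. -/
theorem complex_clifford_periodicity_general {R A M : Type*} [CommRing R] [Invertible (2 : R)]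
    [CommRing A] [Algebra R A] [AddCommGroup M] [Module R M] (Q : QuadraticForm R M) (c₁ c₂ : Rˣ)
    (a b : Aˣ) (ha : (a * a : A) = algebraMap R A c₁)
    (hb : (b * b : A) = algebraMap R A (-(c₁ * c₂))) :
    Nonempty ((A ⊗[R] CliffordAlgebra (Q.prod (CliffordAlgebraQuaternion.Q (c₁ : R) c₂))) ≃ₐ[A]
      ((A ⊗[R] CliffordAlgebra Q) ⊗[A] Matrix (Fin 2) (Fin 2) A)) := by
  let d : Rˣ := -(c₁ * c₂)
  have hd : (↑b⁻¹ * ↑b⁻¹ : A) = algebraMap R A ↑d⁻¹ := by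
    have units_eq : b * b = Units.map (algebraMap R A) d := Units.ext (by simpa [d] using hb)
    simpa using congrArg (fun u : Aˣ => (↑u⁻¹ : A)) units_eq
  let untwist := (isVolumeElement_quaternionBasis_k c₁ c₂).prodEquiv Q
  let rescale : A ⊗[R] CliffordAlgebra (d⁻¹ • Q) ≃ₐ[A] A ⊗[R] CliffordAlgebra Q :=
    (equivBaseChange A _).symm.trans <|
      (equivOfIsometry (baseChangeSMulIsometryEquiv Q b⁻¹ hd)).trans (equivBaseChange A Q)
  let split := baseChangeBinaryCliffordEquivMatrix (c₁ : R) c₂ a ha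
  exact ⟨(Algebra.TensorProduct.congr .refl untwist).trans <|
    (baseChangeTensorEquiv A _ _).trans <| Algebra.TensorProduct.congr rescale split⟩

/-- Atiyah–Bott–Shapiro periodicity, complex case:
`Cℓᶜ_{k+2} ≅ Cℓᶜ_k ⊗ℂ M₂(ℂ)` as ℂ-algebras. -/
theorem complex_clifford_periodicity (k : ℕ) :
    Nonempty ((ℂ ⊗[ℝ] CliffordAlgebra (negDefiniteForm (k + 2))) ≃ₐ[ℂ]
      ((ℂ ⊗[ℝ] CliffordAlgebra (negDefiniteForm k)) ⊗[ℂ] Matrix (Fin 2) (Fin 2) ℂ)) := by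
  let i : ℂˣ := Units.mk0 Complex.I Complex.I_ne_zero
  obtain ⟨periodicity⟩ := complex_clifford_periodicity_general (negDefiniteForm k) (-1) (-1) i i
    (by simp [i]) (by simp [i])
  let splitOff := equivOfIsometry <|
    weightedSumSquaresAddTwoIsometryEquiv fun _ : Fin (k + 2) => (-1 : ℝ)
  exact ⟨(Algebra.TensorProduct.congr .refl splitOff).trans periodicity⟩
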